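/- arXiv:2412.16883 — 4 statements merged into one kernel-verified Lean document; each statement's English description precedes it below -/
import Mathlib

section
/- Let (X, 𝒜) be a measurable space, μ₀ a probability measure on X, k a positive integer, y ∈ ℝ^k, and G, G_θ : X → ℝ^k measurable maps with ‖G(w)‖ ≤ M and ‖G_θ(w)‖ ≤ M for all w ∈ X, where M > 0. Define Φ(w) = (1/2)‖y − G(w)‖², Φ_θ(w) = (1/2)‖y − G_θ(w)‖², Z = ∫_X exp(−Φ) dμ₀ and Z_θ = ∫_X exp(−Φ_θ) dμ₀. Then |Z − Z_θ| ≤ (‖y‖ + M)·(∫_X ‖G(w) − G_θ(w)‖² dμ₀(w))^{1/2}. -/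
open MeasureTheory Real

theorem exp_neg_sub_le_aux (a b : ℝ) (ha : 0 ≤ a) (hb : 0 ≤ b) :
    Real.exp (-a) - Real.exp (-b) ≤ |a - b| := by
  have h1 : Real.exp (-a) ≤ 1 := Real.exp_le_one_iff.2 (by linarith)
  have h2 : Real.exp (-b) = Real.exp (-a) * Real.exp (a - b) := by
    rw [← Real.exp_add]; congr 1; ring
  have h3 := Real.add_one_le_exp (a - b)
  have h4 := Real.exp_pos (-a)
  have h5 := neg_abs_le (a - b)
  have h6 := abs_nonneg (a - b)
  rw [h2]
  nlinarith [mul_le_mul_of_nonneg_left h3 h4.le]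

theorem abs_exp_neg_sub_le_aux (a b : ℝ) (ha : 0 ≤ a) (hb : 0 ≤ b) :
    |Real.exp (-a) - Real.exp (-b)| ≤ |a - b| := by
  refine abs_le.2 ⟨?_, exp_neg_sub_le_aux a b ha hb⟩
  have := exp_neg_sub_le_aux b a hb ha
  rw [abs_sub_comm] at this
  linarith

/-- Evidence-difference estimate: `|Z − Z_θ| ≤ (‖y‖+M)·‖G − G_θ‖_{L²(μ₀)}`. -/
theorem evidence_difference_bound
    {X : Type*} [MeasurableSpace X]
    (μ₀ : Measure X) [IsProbabilityMeasure μ₀]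
    (k : ℕ) (hk : 0 < k) (y : EuclideanSpace ℝ (Fin k))
    (M : ℝ) (hM : 0 < M)
    (G Gθ : X → EuclideanSpace ℝ (Fin k))
    (hG : Measurable G) (hGθ : Measurable Gθ)
    (hGbd : ∀ w : X, ‖G w‖ ≤ M) (hGθbd : ∀ w : X, ‖Gθ w‖ ≤ M)
    (Z Zθ : ℝ)
    (hZ : Z = ∫ w, Real.exp (-((1/2) * ‖y - G w‖ ^ 2)) ∂μ₀)
    (hZθ : Zθ = ∫ w, Real.exp (-((1/2) * ‖y - Gθ w‖ ^ 2)) ∂μ₀) :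
    |Z - Zθ| ≤ (‖y‖ + M) * Real.sqrt (∫ w, ‖G w - Gθ w‖ ^ 2 ∂μ₀) := by
  have hbd : ∀ F : X → EuclideanSpace ℝ (Fin k), Measurable F →
      Integrable (fun w => Real.exp (-((1/2) * ‖y - F w‖ ^ 2))) μ₀ := by
    intro F hF
    refine Integrable.of_bound (C := 1) (by fun_prop) (Filter.Eventually.of_forall fun w => ?_)
    rw [Real.norm_eq_abs, abs_of_pos (Real.exp_pos _), Real.exp_le_one_iff]
    have : 0 ≤ ‖y - F w‖ ^ 2 := by positivity
    linarith
  have hd : ∀ w, ‖G w - Gθ w‖ ≤ 2 * M := fun w => by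
    have := norm_sub_le (G w) (Gθ w)
    linarith [hGbd w, hGθbd w]
  have hf1 : Integrable (fun w => ‖G w - Gθ w‖) μ₀ := by
    refine Integrable.of_bound (C := 2 * M) (by fun_prop) (Filter.Eventually.of_forall fun w => ?_)
    rw [norm_norm]; exact hd w
  have hf2 : Integrable (fun w => ‖G w - Gθ w‖ ^ 2) μ₀ := by
    refine Integrable.of_bound (C := (2 * M) ^ 2) (by fun_prop)
      (Filter.Eventually.of_forall fun w => ?_)
    rw [norm_pow, norm_norm]
    exact pow_le_pow_left₀ (norm_nonneg _) (hd w) 2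
  have hpt : ∀ w, |Real.exp (-((1/2) * ‖y - G w‖ ^ 2)) - Real.exp (-((1/2) * ‖y - Gθ w‖ ^ 2))|
      ≤ (‖y‖ + M) * ‖G w - Gθ w‖ := by
    intro w
    refine (abs_exp_neg_sub_le_aux _ _ (by positivity) (by positivity)).trans ?_
    have e : (1/2) * ‖y - G w‖ ^ 2 - (1/2) * ‖y - Gθ w‖ ^ 2
        = ((‖y - G w‖ + ‖y - Gθ w‖) / 2) * (‖y - G w‖ - ‖y - Gθ w‖) := by ring
    rw [e, abs_mul, abs_of_nonneg (by positivity)]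
    have h1 := norm_sub_le y (G w)
    have h2 := norm_sub_le y (Gθ w)
    have h3 : |‖y - G w‖ - ‖y - Gθ w‖| ≤ ‖G w - Gθ w‖ := by
      refine (abs_norm_sub_norm_le _ _).trans (le_of_eq ?_)
      rw [sub_sub_sub_cancel_left, norm_sub_rev]
    exact mul_le_mul (by linarith [hGbd w, hGθbd w]) h3 (abs_nonneg _) (by positivity)
  have hJ : ∫ w, ‖G w - Gθ w‖ ∂μ₀ ≤ Real.sqrt (∫ w, ‖G w - Gθ w‖ ^ 2 ∂μ₀) := by
    apply Real.le_sqrt_of_sq_le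
    set m := ∫ w, ‖G w - Gθ w‖ ∂μ₀ with hm
    have h0 : ∫ w, (2 * m * ‖G w - Gθ w‖ - m ^ 2) ∂μ₀ ≤ ∫ w, ‖G w - Gθ w‖ ^ 2 ∂μ₀ := by
      refine integral_mono ((hf1.const_mul _).sub (integrable_const _)) hf2 fun w => ?_
      change 2 * m * ‖G w - Gθ w‖ - m ^ 2 ≤ ‖G w - Gθ w‖ ^ 2
      nlinarith [sq_nonneg (‖G w - Gθ w‖ - m)]
    rw [integral_sub (hf1.const_mul _) (integrable_const _), integral_const_mul, ← hm] at h0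
    simp at h0
    nlinarith
  rw [hZ, hZθ, ← integral_sub (hbd G hG) (hbd Gθ hGθ)]
  calc _ ≤ ∫ w, |Real.exp (-((1/2) * ‖y - G w‖ ^ 2)) - Real.exp (-((1/2) * ‖y - Gθ w‖ ^ 2))| ∂μ₀ :=
        abs_integral_le_integral_abs
    _ ≤ ∫ w, (‖y‖ + M) * ‖G w - Gθ w‖ ∂μ₀ :=
        integral_mono ((hbd G hG).sub (hbd Gθ hGθ)).abs (hf1.const_mul _) hpt
    _ = (‖y‖ + M) * ∫ w, ‖G w - Gθ w‖ ∂μ₀ := integral_const_mul _ _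
    _ ≤ _ := mul_le_mul_of_nonneg_left hJ (by positivity)
end

section
/- Let (X, 𝒜) be a measurable space, μ₀ a probability measure on X, k a positive integer, y ∈ ℝ^k, and G, G_θ : X → ℝ^k measurable maps with ‖G(w)‖ ≤ M and ‖G_θ(w)‖ ≤ M for all w ∈ X, where M > 0. Define Φ(w) = (1/2)‖y − G(w)‖² and Φ_θ(w) = (1/2)‖y − G_θ(w)‖². Then ∫_X (exp(−Φ(w)/2) − exp(−Φ_θ(w)/2))² dμ₀(w) ≤ (1/4)(‖y‖ + M)² · ∫_X ‖G(w) − G_θ(w)‖² dμ₀(w). -/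
open MeasureTheory Real

theorem exp_sub_exp_le_aux {p q : ℝ} (hp : p ≤ 0) :
    Real.exp p - Real.exp q ≤ |p - q| := by
  rcases le_total q p with h | h
  · rw [abs_of_nonneg (by linarith)]
    have h1 := Real.add_one_le_exp (q - p)
    have h2 : Real.exp p ≤ 1 := Real.exp_le_one_iff.2 hp
    have h3 : Real.exp q = Real.exp p * Real.exp (q - p) := by
      rw [← Real.exp_add]; congr 1; ring
    rw [h3]
    nlinarith [Real.exp_pos p]
  · have := Real.exp_le_exp.2 h
    linarith [abs_nonneg (p - q)]

theorem abs_exp_sub_exp_le_aux {p q : ℝ} (hp : p ≤ 0) (hq : q ≤ 0) :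
    |Real.exp p - Real.exp q| ≤ |p - q| := by
  refine abs_sub_le_iff.2 ⟨exp_sub_exp_le_aux hp, ?_⟩
  rw [abs_sub_comm]
  exact exp_sub_exp_le_aux hq

/-- Bound on the `L²(μ₀)`-difference of the square roots of the true and
surrogate likelihoods (the term `I₁` in the proof of Theorem 3.2). -/
theorem sqrt_likelihood_difference_bound
    {X : Type*} [MeasurableSpace X]
    (μ₀ : Measure X) [IsProbabilityMeasure μ₀]
    (k : ℕ) (hk : 0 < k) (y : EuclideanSpace ℝ (Fin k))
    (M : ℝ) (hM : 0 < M)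
    (G Gθ : X → EuclideanSpace ℝ (Fin k))
    (hG : Measurable G) (hGθ : Measurable Gθ)
    (hGbd : ∀ w : X, ‖G w‖ ≤ M) (hGθbd : ∀ w : X, ‖Gθ w‖ ≤ M) :
    ∫ w, (Real.exp (-((1/2) * ‖y - G w‖ ^ 2) / 2)
          - Real.exp (-((1/2) * ‖y - Gθ w‖ ^ 2) / 2)) ^ 2 ∂μ₀
      ≤ (1/4) * (‖y‖ + M) ^ 2 * ∫ w, ‖G w - Gθ w‖ ^ 2 ∂μ₀ := by
  rw [← integral_const_mul]
  have hint : Integrable (fun w => ‖G w - Gθ w‖ ^ 2) μ₀ := by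
    refine Integrable.of_bound (C := (M + M) ^ 2)
      ((hG.sub hGθ).norm.pow_const 2).aestronglyMeasurable ?_
    refine Filter.Eventually.of_forall fun w => ?_
    rw [Real.norm_of_nonneg (by positivity)]
    have := (norm_sub_le (G w) (Gθ w)).trans (add_le_add (hGbd w) (hGθbd w))
    gcongr
  refine integral_mono_of_nonneg (Filter.Eventually.of_forall fun w => by positivity)
    (hint.const_mul _) (Filter.Eventually.of_forall fun w => ?_)
  have h1 := abs_exp_sub_exp_le_aux
    (p := -((1/2) * ‖y - G w‖ ^ 2) / 2) (q := -((1/2) * ‖y - Gθ w‖ ^ 2) / 2)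
    (by nlinarith [sq_nonneg ‖y - G w‖]) (by nlinarith [sq_nonneg ‖y - Gθ w‖])
  have ha : ‖y - G w‖ ≤ ‖y‖ + M := (norm_sub_le _ _).trans (by linarith [hGbd w])
  have hb : ‖y - Gθ w‖ ≤ ‖y‖ + M := (norm_sub_le _ _).trans (by linarith [hGθbd w])
  have hd : |‖y - Gθ w‖ - ‖y - G w‖| ≤ ‖G w - Gθ w‖ := by
    have := abs_norm_sub_norm_le (y - Gθ w) (y - G w)
    rwa [sub_sub_sub_cancel_left] at this
  have h2 : |-((1/2) * ‖y - G w‖ ^ 2) / 2 - -((1/2) * ‖y - Gθ w‖ ^ 2) / 2|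
      ≤ (1/2) * (‖y‖ + M) * ‖G w - Gθ w‖ := by
    have e : -((1/2) * ‖y - G w‖ ^ 2) / 2 - -((1/2) * ‖y - Gθ w‖ ^ 2) / 2
        = (1/4) * (‖y - Gθ w‖ + ‖y - G w‖) * (‖y - Gθ w‖ - ‖y - G w‖) := by ring
    rw [e, abs_mul, abs_of_nonneg (by positivity)]
    exact mul_le_mul (by linarith) hd (abs_nonneg _) (by positivity)
  have h3 := pow_le_pow_left₀ (abs_nonneg _) (h1.trans h2) 2
  rw [sq_abs] at h3
  refine h3.trans (le_of_eq ?_)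
  ring
end

section
/- Let (X, 𝒜) be a measurable space, μ₀ a probability measure on X, k a positive integer, y ∈ ℝ^k, and G, G_θ : X → ℝ^k measurable maps with ‖G(w)‖ ≤ M and ‖G_θ(w)‖ ≤ M for all w ∈ X, where M > 0. Define Φ_θ(w) = (1/2)‖y − G_θ(w)‖², Z = ∫_X exp(−(1/2)‖y − G(w)‖²) dμ₀(w) and Z_θ = ∫_X exp(−Φ_θ(w)) dμ₀(w). Then there exists a constant C > 0, depending only on ‖y‖ and M, such that (Z^{−1/2} − Z_θ^{−1/2})² · ∫_X exp(−Φ_θ(w)) dμ₀(w) ≤ C · ∫_X ‖G(w) − G_θ(w)‖² dμ₀(w). -/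
open MeasureTheory Real

lemma aux_exp (u v : ℝ) (hu : 0 ≤ u) (hv : 0 ≤ v) : |rexp (-u) - rexp (-v)| ≤ |u - v| := by
  have key : ∀ a b : ℝ, 0 ≤ a → a ≤ b → |rexp (-a) - rexp (-b)| ≤ |a - b| := by
    intro a b ha hab
    have h1 : rexp (-b) ≤ rexp (-a) := Real.exp_le_exp.mpr (by linarith)
    rw [abs_of_nonneg (by linarith), abs_of_nonpos (by linarith)]
    have h2 : rexp (-b) = rexp (-a) * rexp (-(b - a)) := by
      rw [← Real.exp_add]; congr 1; ring
    have h3 := Real.add_one_le_exp (-(b - a))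
    have h4 : rexp (-a) ≤ 1 := Real.exp_le_one_iff.mpr (by linarith)
    have h5 := Real.exp_pos (-a)
    rw [h2]
    nlinarith
  rcases le_total u v with h | h
  · exact key u v hu h
  · rw [abs_sub_comm, abs_sub_comm u]; exact key v u hv h

lemma aux_rpow (a b c : ℝ) (hc : 0 < c) (ha : c ≤ a) (hb : 0 < b) :
    (a ^ (-(1/2) : ℝ) - b ^ (-(1/2) : ℝ)) ^ 2 * b ≤ (a - b) ^ 2 / c ^ 2 := by
  have ha0 : 0 < a := hc.trans_le ha
  rw [Real.rpow_neg ha0.le, Real.rpow_neg hb.le, ← Real.sqrt_eq_rpow, ← Real.sqrt_eq_rpow]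
  have hs : 0 < √a := Real.sqrt_pos.mpr ha0
  have ht : 0 < √b := Real.sqrt_pos.mpr hb
  have hs2 := Real.sq_sqrt ha0.le
  have ht2 := Real.sq_sqrt hb.le
  generalize √a = s at *
  generalize √b = t at *
  calc (s⁻¹ - t⁻¹) ^ 2 * b = (s - t) ^ 2 * s ^ 2 / a ^ 2 := by
        rw [← hs2, ← ht2]; field_simp; ring
    _ ≤ (s - t) ^ 2 * (s + t) ^ 2 / a ^ 2 := by gcongr; linarith
    _ = (a - b) ^ 2 / a ^ 2 := by rw [← hs2, ← ht2]; ring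
    _ ≤ (a - b) ^ 2 / c ^ 2 := by gcongr

lemma aux_jensen {X : Type*} [MeasurableSpace X] (μ : Measure X) [IsProbabilityMeasure μ]
    (f : X → ℝ) (hf : Integrable f μ) (hf2 : Integrable (fun x => f x ^ 2) μ) :
    (∫ x, f x ∂μ) ^ 2 ≤ ∫ x, f x ^ 2 ∂μ := by
  set m := ∫ x, f x ∂μ with hm
  have h : ∫ x, (2 * m * f x - m ^ 2) ∂μ ≤ ∫ x, f x ^ 2 ∂μ := by
    apply integral_mono ((hf.const_mul _).sub (integrable_const _)) hf2
    intro x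
    simp only [Pi.sub_apply]
    nlinarith [sq_nonneg (f x - m)]
  rw [integral_sub (hf.const_mul _) (integrable_const _), integral_const_mul] at h
  simp at h
  nlinarith

/-- Bound on the term `I₂` in the proof of Theorem 3.2: the normalizing-constant
contribution is controlled, with a constant depending only on `‖y‖` and `M`, by
the `L²(μ₀)`-distance of the forward maps. -/
theorem normalizing_constant_term_bound
    (k : ℕ) (hk : 0 < k) (y : EuclideanSpace ℝ (Fin k)) (M : ℝ) (hM : 0 < M) :
    ∃ C : ℝ, 0 < C ∧
      ∀ (X : Type*) [MeasurableSpace X] (μ₀ : Measure X), IsProbabilityMeasure μ₀ →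
        ∀ G Gθ : X → EuclideanSpace ℝ (Fin k), Measurable G → Measurable Gθ →
          (∀ w : X, ‖G w‖ ≤ M) → (∀ w : X, ‖Gθ w‖ ≤ M) →
          ((∫ w, Real.exp (-((1/2) * ‖y - G w‖ ^ 2)) ∂μ₀) ^ (-(1/2) : ℝ)
            - (∫ w, Real.exp (-((1/2) * ‖y - Gθ w‖ ^ 2)) ∂μ₀) ^ (-(1/2) : ℝ)) ^ 2
            * (∫ w, Real.exp (-((1/2) * ‖y - Gθ w‖ ^ 2)) ∂μ₀)
          ≤ C * ∫ w, ‖G w - Gθ w‖ ^ 2 ∂μ₀ := by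
  have hL : 0 < ‖y‖ + M := by positivity
  set L := ‖y‖ + M with hLdef
  set c := rexp (-((1/2) * L ^ 2)) with hc
  have hc0 : 0 < c := Real.exp_pos _
  refine ⟨L ^ 2 / c ^ 2, by positivity, ?_⟩
  intro X _ μ₀ hμ G Gθ hG hGθ hGM hGθM
  have bd : ∀ F : X → EuclideanSpace ℝ (Fin k), (∀ w, ‖F w‖ ≤ M) → ∀ w, ‖y - F w‖ ≤ L :=
    fun F hF w => (norm_sub_le _ _).trans (by have := hF w; linarith)
  have hint : ∀ F : X → EuclideanSpace ℝ (Fin k), Measurable F →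
      Integrable (fun w => rexp (-((1/2) * ‖y - F w‖ ^ 2))) μ₀ := by
    intro F hF
    refine Integrable.of_bound (C := 1) ?_ ?_
    · exact Measurable.aestronglyMeasurable (by fun_prop)
    · refine Filter.Eventually.of_forall fun w => ?_
      rw [Real.norm_eq_abs, abs_of_pos (Real.exp_pos _)]
      exact Real.exp_le_one_iff.mpr (by have := sq_nonneg ‖y - F w‖; linarith)
  have hlow : ∀ F : X → EuclideanSpace ℝ (Fin k), Measurable F → (∀ w, ‖F w‖ ≤ M) →
      c ≤ ∫ w, rexp (-((1/2) * ‖y - F w‖ ^ 2)) ∂μ₀ := by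
    intro F hF hFM
    have h : ∫ _w : X, c ∂μ₀ ≤ ∫ w, rexp (-((1/2) * ‖y - F w‖ ^ 2)) ∂μ₀ := by
      apply integral_mono (integrable_const _) (hint F hF)
      intro w
      simp only [hc]
      apply Real.exp_le_exp.mpr
      have := pow_le_pow_left₀ (norm_nonneg _) (bd F hFM w) 2
      linarith
    simpa using h
  have hdb : ∀ w, ‖G w - Gθ w‖ ≤ 2 * M := fun w =>
    (norm_sub_le _ _).trans (by have := hGM w; have := hGθM w; linarith)
  have hd : Integrable (fun w => ‖G w - Gθ w‖) μ₀ := by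
    refine Integrable.of_bound (C := 2 * M) ?_ ?_
    · exact Measurable.aestronglyMeasurable (by fun_prop)
    · exact Filter.Eventually.of_forall fun w => by simpa using hdb w
  have hd2 : Integrable (fun w => ‖G w - Gθ w‖ ^ 2) μ₀ := by
    refine Integrable.of_bound (C := (2 * M) ^ 2) ?_ ?_
    · exact Measurable.aestronglyMeasurable (by fun_prop)
    · refine Filter.Eventually.of_forall fun w => ?_
      rw [Real.norm_eq_abs, abs_of_nonneg (sq_nonneg _)]
      exact pow_le_pow_left₀ (norm_nonneg _) (hdb w) 2
  have hdiff : |(∫ w, rexp (-((1/2) * ‖y - G w‖ ^ 2)) ∂μ₀)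
      - ∫ w, rexp (-((1/2) * ‖y - Gθ w‖ ^ 2)) ∂μ₀| ≤ L * ∫ w, ‖G w - Gθ w‖ ∂μ₀ := by
    rw [← integral_sub (hint G hG) (hint Gθ hGθ), ← integral_const_mul]
    refine (abs_integral_le_integral_abs).trans ?_
    apply integral_mono ((hint G hG).sub (hint Gθ hGθ)).abs (hd.const_mul _)
    intro w
    refine (aux_exp _ _ (by positivity) (by positivity)).trans ?_
    have h1 := bd G hGM w
    have h2 := bd Gθ hGθM w
    have h3 : |‖y - G w‖ - ‖y - Gθ w‖| ≤ ‖G w - Gθ w‖ := by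
      refine (abs_norm_sub_norm_le _ _).trans ?_
      rw [sub_sub_sub_cancel_left, norm_sub_rev]
    have h4 : (1/2) * ‖y - G w‖ ^ 2 - (1/2) * ‖y - Gθ w‖ ^ 2
        = ((‖y - G w‖ + ‖y - Gθ w‖) / 2) * (‖y - G w‖ - ‖y - Gθ w‖) := by ring
    rw [h4, abs_mul, abs_of_nonneg (by positivity)]
    exact mul_le_mul (by linarith) h3 (abs_nonneg _) hL.le
  refine (aux_rpow _ _ c hc0 (hlow G hG hGM) (hc0.trans_le (hlow Gθ hGθ hGθM))).trans ?_
  rw [div_mul_eq_mul_div]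
  gcongr
  rw [← sq_abs]
  refine (pow_le_pow_left₀ (abs_nonneg _) hdiff 2).trans ?_
  rw [mul_pow]
  gcongr
  exact aux_jensen μ₀ _ hd hd2
end

section
/- Let (X, 𝒜) be a measurable space, μ₀ a probability measure on X, k a positive integer, y ∈ ℝ^k, M > 0, and let G : X → ℝ^k and G_n : X → ℝ^k (n ∈ ℕ) be measurable maps with ‖G(w)‖ ≤ M and ‖G_n(w)‖ ≤ M for all w ∈ X and all n. Define Φ(w) = (1/2)‖y − G(w)‖², Φ_n(w) = (1/2)‖y − G_n(w)‖², Z = ∫_X exp(−Φ) dμ₀ and Z_n = ∫_X exp(−Φ_n) dμ₀. If ∫_X ‖G(w) − G_n(w)‖² dμ₀(w) → 0 as n → ∞, then ∫_X (√(exp(−Φ(w))/Z) − √(exp(−Φ_n(w))/Z_n))² dμ₀(w) → 0 as n → ∞. -/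
open MeasureTheory Real Filter

/-- Convergence statement of Theorem 3.2: if the surrogate forward maps converge
to the true forward map in `L²(μ₀)`, then the (twice squared) Hellinger distance
between the surrogate posterior and the true posterior converges to zero. -/
theorem hellinger_convergence
    {X : Type*} [MeasurableSpace X]
    (μ₀ : Measure X) [IsProbabilityMeasure μ₀]
    (k : ℕ) (hk : 0 < k) (y : EuclideanSpace ℝ (Fin k)) (M : ℝ) (hM : 0 < M)
    (G : X → EuclideanSpace ℝ (Fin k)) (Gn : ℕ → X → EuclideanSpace ℝ (Fin k))
    (hG : Measurable G) (hGn : ∀ n, Measurable (Gn n))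
    (hGbd : ∀ w : X, ‖G w‖ ≤ M) (hGnbd : ∀ n, ∀ w : X, ‖Gn n w‖ ≤ M)
    (hconv : Tendsto (fun n => ∫ w, ‖G w - Gn n w‖ ^ 2 ∂μ₀) atTop (nhds 0)) :
    Tendsto
      (fun n => ∫ w,
        (Real.sqrt (Real.exp (-((1/2) * ‖y - G w‖ ^ 2))
            / ∫ v, Real.exp (-((1/2) * ‖y - G v‖ ^ 2)) ∂μ₀)
         - Real.sqrt (Real.exp (-((1/2) * ‖y - Gn n w‖ ^ 2))
            / ∫ v, Real.exp (-((1/2) * ‖y - Gn n v‖ ^ 2)) ∂μ₀)) ^ 2 ∂μ₀)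
      atTop (nhds 0) := by
  have key : ∀ H : X → EuclideanSpace ℝ (Fin k), Measurable H →
      Measurable (fun w => Real.exp (-((1/2) * ‖y - H w‖ ^ 2))) := by
    intro H hH
    have h1 : Measurable (fun w => ‖y - H w‖) := (measurable_const.sub hH).norm
    exact Real.measurable_exp.comp (((h1.pow_const 2).const_mul (1/2)).neg)
  have le1 : ∀ v : EuclideanSpace ℝ (Fin k), Real.exp (-((1/2) * ‖y - v‖ ^ 2)) ≤ 1 := by
    intro v
    rw [Real.exp_le_one_iff]
    have := sq_nonneg ‖y - v‖
    linarith
  obtain ⟨c, hc⟩ : ∃ c, c = Real.exp (-((1/2) * (‖y‖ + M) ^ 2)) := ⟨_, rfl⟩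
  have c0 : 0 < c := hc ▸ Real.exp_pos _
  have gec : ∀ v : EuclideanSpace ℝ (Fin k), ‖v‖ ≤ M →
      c ≤ Real.exp (-((1/2) * ‖y - v‖ ^ 2)) := by
    intro v hv
    rw [hc, Real.exp_le_exp]
    have h1 : ‖y - v‖ ≤ ‖y‖ + M := (norm_sub_le _ _).trans (by linarith)
    have h2 := pow_le_pow_left₀ (norm_nonneg _) h1 2
    linarith
  have hint : ∀ H : X → EuclideanSpace ℝ (Fin k), Measurable H →
      Integrable (fun w => Real.exp (-((1/2) * ‖y - H w‖ ^ 2))) μ₀ := by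
    intro H hH
    refine Integrable.of_bound (key H hH).aestronglyMeasurable 1 (Eventually.of_forall ?_)
    intro w
    rw [Real.norm_eq_abs, abs_of_pos (Real.exp_pos _)]
    exact le1 _
  have hZ : ∀ H : X → EuclideanSpace ℝ (Fin k), Measurable H → (∀ w, ‖H w‖ ≤ M) →
      c ≤ ∫ w, Real.exp (-((1/2) * ‖y - H w‖ ^ 2)) ∂μ₀ := by
    intro H hH hb
    have := integral_mono (integrable_const c) (hint H hH) (fun w => gec _ (hb w))
    simpa using this
  have hmeas : TendstoInMeasure μ₀ (fun n w => ‖G w - Gn n w‖ ^ 2) atTop (fun _ => (0:ℝ)) := by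
    refine tendstoInMeasure_of_tendsto_eLpNorm (p := 1) one_ne_zero ?_ ?_ ?_
    · intro n
      exact (((hG.sub (hGn n)).norm).pow_const 2).aestronglyMeasurable
    · exact aestronglyMeasurable_const
    · have h2 : ∀ n, eLpNorm ((fun w => ‖G w - Gn n w‖ ^ 2) - (fun _ => (0:ℝ))) 1 μ₀
          = ENNReal.ofReal (∫ w, ‖G w - Gn n w‖ ^ 2 ∂μ₀) := by
        intro n
        have hi : Integrable (fun w => ‖G w - Gn n w‖ ^ 2) μ₀ := by
          refine Integrable.of_bound
            (((hG.sub (hGn n)).norm).pow_const 2).aestronglyMeasurable ((M + M)^2)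
            (Eventually.of_forall ?_)
          intro w
          rw [Real.norm_eq_abs, abs_of_nonneg (by positivity)]
          exact pow_le_pow_left₀ (norm_nonneg _)
            ((norm_sub_le _ _).trans (add_le_add (hGbd w) (hGnbd n w))) 2
        rw [eLpNorm_one_eq_lintegral_enorm, ← ofReal_integral_norm_eq_lintegral_enorm (hi.sub (integrable_const 0))]
        simp
      simp_rw [h2]
      simpa using ENNReal.tendsto_ofReal hconv
  refine tendsto_of_subseq_tendsto ?_
  intro ns hns
  have hm2 : TendstoInMeasure μ₀ (fun n w => ‖G w - Gn (ns n) w‖ ^ 2) atTop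
      (fun _ => (0:ℝ)) := fun ε hε => (hmeas ε hε).comp hns
  obtain ⟨ms, -, hae⟩ := hm2.exists_seq_tendsto_ae
  refine ⟨ms, ?_⟩
  have hexp : ∀ᵐ w ∂μ₀, Tendsto
      (fun i => Real.exp (-((1/2) * ‖y - Gn (ns (ms i)) w‖ ^ 2))) atTop
      (nhds (Real.exp (-((1/2) * ‖y - G w‖ ^ 2)))) := by
    filter_upwards [hae] with w hw
    have h1 : Tendsto (fun i => ‖G w - Gn (ns (ms i)) w‖) atTop (nhds 0) := by
      have := hw.sqrt
      simpa using this
    have h2 : Tendsto (fun i => Gn (ns (ms i)) w) atTop (nhds (G w)) := by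
      rw [tendsto_iff_norm_sub_tendsto_zero]
      simpa only [norm_sub_rev] using h1
    have hcont : Continuous (fun v : EuclideanSpace ℝ (Fin k) =>
        Real.exp (-((1/2) * ‖y - v‖ ^ 2))) := by fun_prop
    exact (hcont.tendsto (G w)).comp h2
  have hZt : Tendsto (fun i => ∫ v, Real.exp (-((1/2) * ‖y - Gn (ns (ms i)) v‖ ^ 2)) ∂μ₀) atTop
      (nhds (∫ v, Real.exp (-((1/2) * ‖y - G v‖ ^ 2)) ∂μ₀)) := by
    refine tendsto_integral_of_dominated_convergence (fun _ => 1)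
      (fun i => (key _ (hGn _)).aestronglyMeasurable) (integrable_const _) ?_ hexp
    intro i
    refine Eventually.of_forall fun w => ?_
    rw [Real.norm_eq_abs, abs_of_pos (Real.exp_pos _)]
    exact le1 _
  have hfin := tendsto_integral_of_dominated_convergence (μ := μ₀)
    (F := fun i w => (Real.sqrt (Real.exp (-((1/2) * ‖y - G w‖ ^ 2))
            / ∫ v, Real.exp (-((1/2) * ‖y - G v‖ ^ 2)) ∂μ₀)
         - Real.sqrt (Real.exp (-((1/2) * ‖y - Gn (ns (ms i)) w‖ ^ 2))
            / ∫ v, Real.exp (-((1/2) * ‖y - Gn (ns (ms i)) v‖ ^ 2)) ∂μ₀)) ^ 2)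
    (f := fun _ => (0:ℝ)) (fun _ => 1 / c + 1 / c) ?_ (integrable_const _) ?_ ?_
  · simpa using hfin
  · intro i
    exact ((((key _ hG).div_const _).sqrt.sub
      ((key _ (hGn _)).div_const _).sqrt).pow_const 2).aestronglyMeasurable
  · intro i
    refine Eventually.of_forall fun w => ?_
    rw [Real.norm_eq_abs, abs_of_nonneg (sq_nonneg _)]
    have hb : ∀ H : X → EuclideanSpace ℝ (Fin k), Measurable H → (∀ w, ‖H w‖ ≤ M) →
        0 ≤ Real.exp (-((1/2) * ‖y - H w‖ ^ 2)) / ∫ v, Real.exp (-((1/2) * ‖y - H v‖ ^ 2)) ∂μ₀ ∧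
        Real.exp (-((1/2) * ‖y - H w‖ ^ 2)) / ∫ v, Real.exp (-((1/2) * ‖y - H v‖ ^ 2)) ∂μ₀
          ≤ 1 / c := by
      intro H hH hb
      have := hZ H hH hb
      exact ⟨div_nonneg (Real.exp_pos _).le (c0.le.trans this),
        div_le_div₀ zero_le_one (le1 _) c0 this⟩
    obtain ⟨a0, a1⟩ := hb G hG hGbd
    obtain ⟨b0, b1⟩ := hb _ (hGn (ns (ms i))) (hGnbd _)
    have ha := Real.sq_sqrt a0
    have hb' := Real.sq_sqrt b0
    have hab := mul_nonneg (Real.sqrt_nonneg (Real.exp (-((1/2) * ‖y - G w‖ ^ 2))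
            / ∫ v, Real.exp (-((1/2) * ‖y - G v‖ ^ 2)) ∂μ₀))
      (Real.sqrt_nonneg (Real.exp (-((1/2) * ‖y - Gn (ns (ms i)) w‖ ^ 2))
            / ∫ v, Real.exp (-((1/2) * ‖y - Gn (ns (ms i)) v‖ ^ 2)) ∂μ₀))
    rw [sub_sq, ha, hb']
    linarith
  · filter_upwards [hexp] with w hw
    have h1 := (hw.div hZt (c0.trans_le (hZ G hG hGbd)).ne').sqrt
    have h2 := (h1.const_sub (Real.sqrt (Real.exp (-((1/2) * ‖y - G w‖ ^ 2))
            / ∫ v, Real.exp (-((1/2) * ‖y - G v‖ ^ 2)) ∂μ₀))).pow 2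
    rw [sub_self, zero_pow two_ne_zero] at h2
    exact h2
end
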